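/- Let n ≥ 4 be even and let G be a unicyclic graph of order n. Then φ(G) = ⌊n/2⌋ + 2 if and only if G is isomorphic to U((n-2)/2, (n-4)/2), or n = 6 and G is isomorphic to one of U_{6,0} (the 6-cycle) or U_{5,1}, or n = 8 and G is isomorphic to U_{4,4}. -/

import Mathlib

open SimpleGraph

/-- A dissociation set: a set of vertices inducing a subgraph of maximum degree at most 1,
i.e., every vertex of `S` has at most one neighbour inside `S`. -/
def IsDissoc {V : Type*} (G : SimpleGraph V) (S : Set V) : Prop :=
  ∀ v ∈ S, {u | u ∈ S ∧ G.Adj v u}.Subsingleton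

/-- A maximal dissociation set: a dissociation set not properly contained in another one. -/
def IsMaxDissoc {V : Type*} (G : SimpleGraph V) (S : Set V) : Prop :=
  IsDissoc G S ∧ ∀ T : Set V, IsDissoc G T → S ⊆ T → S = T

/-- `phi G` is the number of maximal dissociation sets of `G`. -/
noncomputable def phi {V : Type*} (G : SimpleGraph V) : ℕ :=
  {S : Set V | IsMaxDissoc G S}.ncard

/-- The number of maximal dissociation sets of `G` not containing `u`. -/
noncomputable def phiNot {V : Type*} (G : SimpleGraph V) (u : V) : ℕ :=
  {S : Set V | IsMaxDissoc G S ∧ u ∉ S}.ncard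

/-- The number of maximal dissociation sets `S` of `G` with `u ∈ S` and
`u` of degree 0 in the subgraph induced by `S`. -/
noncomputable def phi0 {V : Type*} (G : SimpleGraph V) (u : V) : ℕ :=
  {S : Set V | IsMaxDissoc G S ∧ u ∈ S ∧ ∀ x ∈ S, ¬ G.Adj u x}.ncard

/-- The number of maximal dissociation sets `S` of `G` with `u ∈ S` and
`u` of degree 1 in the subgraph induced by `S`. -/
noncomputable def phi1 {V : Type*} (G : SimpleGraph V) (u : V) : ℕ :=
  {S : Set V | IsMaxDissoc G S ∧ u ∈ S ∧ ∃! x, x ∈ S ∧ G.Adj u x}.ncard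

/-- A unicyclic graph: a connected graph whose number of edges equals its number of vertices
(equivalently, a connected graph with exactly one cycle). -/
def IsUnicyclic {V : Type*} [Fintype V] (G : SimpleGraph V) : Prop :=
  G.Connected ∧ G.edgeSet.ncard = Fintype.card V

/-- The tree `T(p,q)` (for `q ≤ p`): obtained from the star `K_{1,p}` by subdividing
exactly `q` of its edges.  The centre is `Sum.inl ()`, the `p` neighbours of the centre are
`Sum.inr (Sum.inl i)`, and for `j < q` the vertex `Sum.inr (Sum.inr j)` is the subdivision
pendant attached to the `j`-th neighbour.  It has `1 + p + q` vertices. -/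
def treeT (p q : ℕ) (h : q ≤ p) : SimpleGraph (Unit ⊕ Fin p ⊕ Fin q) :=
  SimpleGraph.fromRel fun a b =>
    (∃ i : Fin p, a = Sum.inl () ∧ b = Sum.inr (Sum.inl i)) ∨
    (∃ j : Fin q, a = Sum.inr (Sum.inl (Fin.castLE h j)) ∧ b = Sum.inr (Sum.inr j))

/-- The unicyclic graph `U(p,q)` (for `q ≤ p`): obtained by identifying one vertex of the
triangle `K₃` with the centre of `T(p,q)`.  The centre is `Sum.inl ()`, the two other triangle
vertices are `Sum.inr (Sum.inl 0)` and `Sum.inr (Sum.inl 1)`, and the copy of `T(p,q)` sits on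
the remaining vertices.  It has `3 + p + q` vertices. -/
def graphU (p q : ℕ) (h : q ≤ p) : SimpleGraph (Unit ⊕ Fin 2 ⊕ Fin p ⊕ Fin q) :=
  SimpleGraph.fromRel fun a b =>
    (a = Sum.inl () ∧ b = Sum.inr (Sum.inl 0)) ∨
    (a = Sum.inl () ∧ b = Sum.inr (Sum.inl 1)) ∨
    (a = Sum.inr (Sum.inl 0) ∧ b = Sum.inr (Sum.inl 1)) ∨
    (∃ i : Fin p, a = Sum.inl () ∧ b = Sum.inr (Sum.inr (Sum.inl i))) ∨
    (∃ j : Fin q, a = Sum.inr (Sum.inr (Sum.inl (Fin.castLE h j))) ∧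
      b = Sum.inr (Sum.inr (Sum.inr j)))

/-- The unicyclic graph obtained from the cycle `C_r` by attaching one pendant vertex
`Sum.inr j` to the cycle vertex `Sum.inl (f j)` for each `j : Fin t`.  For injective `f`
this is a member of the class `𝒰_{r,t}`. -/
def graphUrtF (r t : ℕ) (f : Fin t → Fin r) : SimpleGraph (Fin r ⊕ Fin t) :=
  SimpleGraph.fromRel fun a b =>
    (∃ i j : Fin r, a = Sum.inl i ∧ b = Sum.inl j ∧ (cycleGraph r).Adj i j) ∨
    (∃ j : Fin t, a = Sum.inl (f j) ∧ b = Sum.inr j)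

/-- The canonical member `U_{r,t}` of `𝒰_{r,t}` (for `t ≤ r`): the cycle `C_r` with one
pendant vertex attached to each of its first `t` vertices. -/
def graphUrt (r t : ℕ) (h : t ≤ r) : SimpleGraph (Fin r ⊕ Fin t) :=
  graphUrtF r t (Fin.castLE h)

/-- A caterpillar: a tree in which deleting all vertices of degree 1 leaves a path. -/
def IsCaterpillar {V : Type*} [Fintype V] (G : SimpleGraph V) : Prop :=
  G.IsTree ∧ ∃ m : ℕ,
    Nonempty ((G.induce {v | 2 ≤ (G.neighborSet v).ncard}) ≃g SimpleGraph.pathGraph m)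

/-- The graph `G₁` obtained from `U` by adding `k` new pendant vertices
`v₁ = Sum.inr 0, …, v_k = Sum.inr (k-1)`, each adjacent to `w`. -/
def addPendants {V : Type*} (U : SimpleGraph V) (w : V) (k : ℕ) : SimpleGraph (V ⊕ Fin k) :=
  SimpleGraph.fromRel fun a b =>
    (∃ x y, a = Sum.inl x ∧ b = Sum.inl y ∧ U.Adj x y) ∨
    (∃ j : Fin k, a = Sum.inl w ∧ b = Sum.inr j)

/-- The graph `G₂ = G₁ - w v_k + v₁ v_k`: obtained from `U` by attaching the pendant vertices
`v₁, …, v_{k-1}` to `w` and the vertex `v_k` to `v₁`. -/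
def swapPendant {V : Type*} (U : SimpleGraph V) (w : V) (k : ℕ) : SimpleGraph (V ⊕ Fin k) :=
  SimpleGraph.fromRel fun a b =>
    (∃ x y, a = Sum.inl x ∧ b = Sum.inl y ∧ U.Adj x y) ∨
    (∃ j : Fin k, j.val < k - 1 ∧ a = Sum.inl w ∧ b = Sum.inr j) ∨
    (∃ j₀ j₁ : Fin k, j₀.val = 0 ∧ j₁.val = k - 1 ∧ a = Sum.inr j₀ ∧ b = Sum.inr j₁)

/-- The graph obtained from `H` by attaching a pendant path of length 2 at `w`:
two new vertices `v = Sum.inr 0` and `u = Sum.inr 1` with edges `w v` and `v u`. -/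
def addPath2 {V : Type*} (H : SimpleGraph V) (w : V) : SimpleGraph (V ⊕ Fin 2) :=
  SimpleGraph.fromRel fun a b =>
    (∃ x y, a = Sum.inl x ∧ b = Sum.inl y ∧ H.Adj x y) ∨
    (a = Sum.inl w ∧ b = Sum.inr 0) ∨
    (a = Sum.inr 0 ∧ b = Sum.inr 1)

/-!
Write the order as `2 * q + 4`; one shows `phi G ≥ q + 4` by induction on `q`, keeping track of
equality. Suppose first that `G` has a pendant pair `u, v` at `w`: a pendant path `w v u`, or
twin leaves `u, v` at `w`. Each maximal dissociation set of `G - u - v` extends to one of `G` which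
does not contain both `v` and `w`, while some maximal dissociation set of `G` does contain both.
Hence deleting `u` and `v`, which leaves a unicyclic graph, lowers `phi` by at least one. If
`G - u - v` is extremal, a second new set appears unless `G - u - v` is `U(q, q - 1)` and `w v u` is
a pendant path at its centre; then `G` is `U(q + 1, q)`.

If there is no pendant pair, then each vertex has at most one leaf neighbour and each non-leaf has
at least two non-leaf neighbours; as the average degree is two, it has exactly two, so `G` is a
cycle with at most one leaf at each vertex. Long cycles contain long paths, which have too many
maximal dissociation sets because `phi` is supermultiplicative over non-adjacent induced subgraphs;
short cycles are finitely many cases.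
-/

section DissociationSets

variable {V W : Type*} {G : SimpleGraph V} {H : SimpleGraph W} {S T : Set V}

theorem IsDissoc.mono (hT : IsDissoc G T) (h : S ⊆ T) : IsDissoc G S :=
  fun v hv => (hT v (h hv)).anti fun _ hu => ⟨h hu.1, hu.2⟩

theorem IsDissoc.eq_of_adj (hS : IsDissoc G S) {a b c : V} (ha : a ∈ S) (hb : b ∈ S) (hc : c ∈ S)
    (hab : G.Adj a b) (hac : G.Adj a c) : b = c :=
  hS a ha ⟨hb, hab⟩ ⟨hc, hac⟩

theorem isDissoc_pair (G : SimpleGraph V) (a b : V) : IsDissoc G {a, b} := by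
  rintro v hv x ⟨hx, hvx⟩ y ⟨hy, hvy⟩
  have hx' := hvx.ne
  have hy' := hvy.ne
  grind

theorem IsDissoc.union (hS : IsDissoc G S) (hT : IsDissoc G T)
    (hST : ∀ x ∈ S, ∀ y ∈ T, ¬ G.Adj x y) : IsDissoc G (S ∪ T) := by
  rintro v (hv | hv) x ⟨hx | hx, hvx⟩ y ⟨hy | hy, hvy⟩
  · exact hS.eq_of_adj hv hx hy hvx hvy
  · exact absurd hvy (hST v hv y hy)
  · exact absurd hvx (hST v hv x hx)
  · exact absurd hvx (hST v hv x hx)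
  · exact absurd hvx.symm (hST x hx v hv)
  · exact absurd hvx.symm (hST x hx v hv)
  · exact absurd hvy.symm (hST y hy v hv)
  · exact hT.eq_of_adj hv hx hy hvx hvy

theorem IsDissoc.insert (hS : IsDissoc G S) {u y : V}
    (hu : ∀ x ∈ S, G.Adj u x → x = y ∧ ∀ z ∈ S, ¬ G.Adj x z) : IsDissoc G (insert u S) := by
  rintro v (rfl | hv) a ⟨rfl | ha, hva⟩ b ⟨rfl | hb, hvb⟩
  · rfl
  · exact absurd rfl hva.ne
  · exact absurd rfl hvb.ne
  · rw [(hu a ha hva).1, (hu b hb hvb).1]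
  · rfl
  · exact absurd hvb ((hu v hv hva.symm).2 b hb)
  · exact absurd hva ((hu v hv hvb.symm).2 a ha)
  · exact hS.eq_of_adj hv ha hb hva hvb

theorem IsDissoc.preimage (f : H ↪g G) (hS : IsDissoc G S) : IsDissoc H (f ⁻¹' S) :=
  fun _ hv _ ha _ hb => f.injective
    (hS.eq_of_adj hv ha.1 hb.1 (f.map_rel_iff.2 ha.2) (f.map_rel_iff.2 hb.2))

theorem IsDissoc.image (f : H ↪g G) {S : Set W} (hS : IsDissoc H S) : IsDissoc G (f '' S) := by
  rintro _ ⟨v, hv, rfl⟩ _ ⟨⟨a, ha, rfl⟩, hva⟩ _ ⟨⟨b, hb, rfl⟩, hvb⟩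
  exact congrArg f (hS.eq_of_adj hv ha hb (f.map_rel_iff.1 hva) (f.map_rel_iff.1 hvb))

theorem isMaxDissoc_iff_maximal : IsMaxDissoc G S ↔ Maximal (IsDissoc G) S :=
  maximal_iff.symm

theorem isMaxDissoc_iff_forall_insert :
    IsMaxDissoc G S ↔ IsDissoc G S ∧ ∀ x ∉ S, ¬ IsDissoc G (insert x S) :=
  isMaxDissoc_iff_maximal.trans (Set.maximal_iff_forall_insert fun _ _ => IsDissoc.mono)

theorem IsDissoc.exists_isMaxDissoc_superset [Finite V] (hS : IsDissoc G S) :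
    ∃ T, IsMaxDissoc G T ∧ S ⊆ T := by
  obtain ⟨T, hST, hT⟩ := (Set.toFinite {T : Set V | IsDissoc G T}).exists_le_maximal hS
  exact ⟨T, isMaxDissoc_iff_maximal.2 hT, hST⟩

theorem IsMaxDissoc.preimage_eq (f : H ↪g G) {S : Set W} (hS : IsMaxDissoc H S)
    (hT : IsDissoc G T) (h : f '' S ⊆ T) : f ⁻¹' T = S :=
  (hS.2 _ (hT.preimage f) (Set.image_subset_iff.1 h)).symm

end DissociationSets

section Counting

variable {V W W' : Type*} [Finite V] {G : SimpleGraph V} {H : SimpleGraph W} {H' : SimpleGraph W'}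

theorem phi_add_ncard_le (f : H ↪g G) {N : Set (Set V)} (hN : ∀ T ∈ N, IsMaxDissoc G T)
    (hext : ∀ S, IsMaxDissoc H S → ∃ T, IsMaxDissoc G T ∧ f '' S ⊆ T ∧ T ∉ N) :
    phi H + N.ncard ≤ phi G := by
  choose! E hmax hsub hnot using hext
  have htrace : ∀ S, IsMaxDissoc H S → f ⁻¹' E S = S := fun S hS =>
    hS.preimage_eq f (hmax S hS).1 (hsub S hS)
  have hinj : Set.InjOn E {S | IsMaxDissoc H S} := fun S hS S' hS' h => by
    rw [← htrace S hS, h, htrace S' hS']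
  have hdisj : Disjoint (E '' {S | IsMaxDissoc H S}) N :=
    Set.disjoint_left.2 <| Set.forall_mem_image.2 hnot
  rw [phi, ← hinj.ncard_image, ← Set.ncard_union_eq hdisj]
  exact Set.ncard_le_ncard (Set.union_subset (Set.image_subset_iff.2 hmax) hN)

theorem phi_le_of_embedding (f : H ↪g G) : phi H ≤ phi G := by
  simpa only [Set.ncard_empty, add_zero] using
    phi_add_ncard_le f (N := ∅) (by simp) fun S hS => by
      simpa using (hS.1.image f).exists_isMaxDissoc_superset

theorem phi_eq_of_iso (e : H ≃g G) : phi H = phi G :=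
  have : Finite W := .of_equiv V e.symm.toEquiv
  (phi_le_of_embedding e.toEmbedding).antisymm (phi_le_of_embedding e.symm.toEmbedding)

theorem phi_mul_phi_le (f : H ↪g G) (g : H' ↪g G) (hfg : ∀ x y, ¬ G.Adj (f x) (g y)) :
    phi H * phi H' ≤ phi G := by
  have hext : ∀ p : Set W × Set W', IsMaxDissoc H p.1 ∧ IsMaxDissoc H' p.2 →
      ∃ T, IsMaxDissoc G T ∧ f '' p.1 ∪ g '' p.2 ⊆ T := fun p hp => by
    refine ((hp.1.1.image f).union (hp.2.1.image g) ?_).exists_isMaxDissoc_superset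
    rintro _ ⟨x, -, rfl⟩ _ ⟨y, -, rfl⟩
    exact hfg x y
  choose! E hmax hsub using hext
  have hleft : ∀ p, IsMaxDissoc H p.1 ∧ IsMaxDissoc H' p.2 → f ⁻¹' E p = p.1 := fun p hp =>
    hp.1.preimage_eq f (hmax p hp).1 (Set.union_subset_iff.1 (hsub p hp)).1
  have hright : ∀ p, IsMaxDissoc H p.1 ∧ IsMaxDissoc H' p.2 → g ⁻¹' E p = p.2 := fun p hp =>
    hp.2.preimage_eq g (hmax p hp).1 (Set.union_subset_iff.1 (hsub p hp)).2
  rw [phi, phi, ← Set.ncard_prod]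
  refine Set.ncard_le_ncard_of_injOn E hmax fun p hp p' hp' h => Prod.ext ?_ ?_
  · rw [← hleft p hp, h, hleft p' hp']
  · rw [← hright p hp, h, hright p' hp']

end Counting

section Deletable

variable {V : Type*} {G : SimpleGraph V}

/-- A vertex `w` of `G` is deletable if it lies in a dissociation set `S` of `G` such that `S \ {w}`
is a maximal dissociation set of `G - w`. Attaching a pendant pair at a deletable vertex creates at
least two new maximal dissociation sets. -/
def DeletableAt (G : SimpleGraph V) (w : V) : Prop :=
  ∃ S, IsDissoc G S ∧ w ∈ S ∧ ∀ x ∉ S, ¬ IsDissoc G (insert x (S \ {w}))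

end Deletable

section Decidability

variable {V : Type*} [DecidableEq V] (G : SimpleGraph V) [DecidableRel G.Adj]

instance IsDissoc.decidable (S : Finset V) : Decidable (IsDissoc G (S : Set V)) :=
  decidable_of_iff (∀ v ∈ S, ∀ a ∈ S, G.Adj v a → ∀ b ∈ S, G.Adj v b → a = b)
    ⟨fun h v hv _ ha _ hb => h v hv _ ha.1 ha.2 _ hb.1 hb.2,
      fun h _ hv _ ha hva _ hb hvb => h.eq_of_adj hv ha hb hva hvb⟩

variable [Fintype V]

theorem phi_eq_card : phi G = Finset.card
    {S : Finset V | IsDissoc G (S : Set V) ∧ ∀ x ∉ S, ¬ IsDissoc G (↑(insert x S) : Set V)} := by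
  rw [phi, ← Set.ncard_coe_finset, ← Set.ncard_image_of_injective _ Finset.coe_injective]
  congr 1
  ext S
  lift S to Finset V using Set.toFinite S
  simp [isMaxDissoc_iff_forall_insert]

instance DeletableAt.decidable (w : V) : Decidable (DeletableAt G w) :=
  decidable_of_iff (∃ S : Finset V, IsDissoc G (S : Set V) ∧ w ∈ S ∧
      ∀ x ∉ S, ¬ IsDissoc G (↑(insert x (S.erase w)) : Set V))
    ⟨fun ⟨S, hS⟩ => ⟨S, by simpa using hS⟩, fun ⟨S, hS⟩ => by
      lift S to Finset V using Set.toFinite S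
      exact ⟨S, by simpa using hS⟩⟩

end Decidability

section GraphUrtF

variable {r t : ℕ} {m : Fin t → Fin r}

@[simp]
theorem graphUrtF_adj_inl_inl {i j : Fin r} :
    (graphUrtF r t m).Adj (.inl i) (.inl j) ↔ (cycleGraph r).Adj i j := by
  simp only [graphUrtF, fromRel_adj, Sum.inl.injEq, reduceCtorEq, and_false, exists_false, or_false,
    exists_and_left, exists_eq_left', ne_eq, (cycleGraph r).adj_comm j i, or_self]
  exact and_iff_right_of_imp Adj.ne

@[simp]
theorem graphUrtF_adj_inl_inr {i : Fin r} {j : Fin t} :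
    (graphUrtF r t m).Adj (.inl i) (.inr j) ↔ i = m j := by
  simp [graphUrtF]

@[simp]
theorem graphUrtF_adj_inr_inl {i : Fin r} {j : Fin t} :
    (graphUrtF r t m).Adj (.inr j) (.inl i) ↔ i = m j := by
  rw [adj_comm, graphUrtF_adj_inl_inr]

@[simp]
theorem not_graphUrtF_adj_inr_inr {i j : Fin t} : ¬ (graphUrtF r t m).Adj (.inr i) (.inr j) := by
  simp [graphUrtF]

instance graphUrtF.decidableRelAdj : DecidableRel (graphUrtF r t m).Adj
  | .inl i, .inl j => decidable_of_iff ((cycleGraph r).Adj i j) graphUrtF_adj_inl_inl.symm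
  | .inl i, .inr j => decidable_of_iff (i = m j) graphUrtF_adj_inl_inr.symm
  | .inr j, .inl i => decidable_of_iff (i = m j) graphUrtF_adj_inr_inl.symm
  | .inr _, .inr _ => isFalse not_graphUrtF_adj_inr_inr

instance graphUrt.decidableRelAdj {h : t ≤ r} : DecidableRel (graphUrt r t h).Adj :=
  graphUrtF.decidableRelAdj

end GraphUrtF

section SmallGraphs

instance decidableRelPathGraphAdj (n : ℕ) : DecidableRel (pathGraph n).Adj :=
  fun _ _ => decidable_of_iff _ pathGraph_adj.symm

theorem phi_cycleGraph_four : phi (cycleGraph 4) = 6 := by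
  rw [phi_eq_card]; decide +kernel

theorem phi_cycleGraph_six : phi (cycleGraph 6) = 5 := by
  rw [phi_eq_card]; decide +kernel

theorem phi_cycleGraph_seven : phi (cycleGraph 7) = 14 := by
  rw [phi_eq_card]; decide +kernel

theorem phi_cycleGraph_eight : phi (cycleGraph 8) = 14 := by
  rw [phi_eq_card]; decide +kernel

theorem phi_graphUrt_three_three : phi (graphUrt 3 3 le_rfl) = 6 := by
  rw [phi_eq_card]; decide +kernel

theorem phi_graphUrt_four_four : phi (graphUrt 4 4 le_rfl) = 6 := by
  rw [phi_eq_card]; decide +kernel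

theorem phi_graphUrt_five_one : phi (graphUrt 5 1 (by omega)) = 5 := by
  rw [phi_eq_card]; decide +kernel

theorem phi_graphUrtF_five_two : phi (graphUrtF 5 2 ![0, 2]) = 8 := by
  rw [phi_eq_card]; decide +kernel

theorem phi_graphUrt_six_one : phi (graphUrt 6 1 (by omega)) = 9 := by
  rw [phi_eq_card]; decide +kernel

theorem phi_pathGraph_three : phi (pathGraph 3) = 3 := by
  rw [phi_eq_card]; decide +kernel

theorem phi_pathGraph_six : phi (pathGraph 6) = 6 := by
  rw [phi_eq_card]; decide +kernel

theorem phi_pathGraph_seven : phi (pathGraph 7) = 9 := by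
  rw [phi_eq_card]; decide +kernel

theorem phi_pathGraph_eight : phi (pathGraph 8) = 12 := by
  rw [phi_eq_card]; decide +kernel

theorem phi_pathGraph_nine : phi (pathGraph 9) = 16 := by
  rw [phi_eq_card]; decide +kernel

theorem deletableAt_cycleGraph_six (w : Fin 6) : DeletableAt (cycleGraph 6) w := by
  revert w; decide +kernel

theorem deletableAt_graphUrt_five_one (w : Fin 5 ⊕ Fin 1) :
    DeletableAt (graphUrt 5 1 (by omega)) w := by
  revert w; decide +kernel

theorem deletableAt_graphUrt_four_four (w : Fin 4 ⊕ Fin 4) :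
    DeletableAt (graphUrt 4 4 le_rfl) w := by
  revert w; decide +kernel

end SmallGraphs

section PathsAndCycles

theorem phi_pathGraph_mul_le (m n : ℕ) :
    phi (pathGraph m) * phi (pathGraph n) ≤ phi (pathGraph (m + 1 + n)) := by
  let f : pathGraph m ↪g pathGraph (m + 1 + n) :=
    ⟨(Fin.castAddEmb 1).trans (Fin.castAddEmb n), by simp [pathGraph_adj]⟩
  let g : pathGraph n ↪g pathGraph (m + 1 + n) :=
    ⟨Fin.natAddEmb (m + 1), by simp [pathGraph_adj, add_assoc]⟩
  refine phi_mul_phi_le f g fun x y h => ?_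
  have : x.val + 1 = m + 1 + y.val ∨ m + 1 + y.val + 1 = x.val := pathGraph_adj.1 h
  omega

theorem add_four_le_phi_pathGraph {k : ℕ} (hk : 8 ≤ k) : k + 4 ≤ phi (pathGraph k) := by
  have step (j : ℕ) : phi (pathGraph j) * 3 ≤ phi (pathGraph (j + 4)) :=
    phi_pathGraph_three ▸ phi_pathGraph_mul_le j 3
  induction k using Nat.strong_induction_on with | _ k ih => ?_
  obtain rfl | rfl | rfl | rfl | hk' : k = 8 ∨ k = 9 ∨ k = 10 ∨ k = 11 ∨ 12 ≤ k := by omega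
  · rw [phi_pathGraph_eight]
  · rw [phi_pathGraph_nine]; norm_num
  · exact le_trans (by rw [phi_pathGraph_six]; norm_num) (step 6)
  · exact le_trans (by rw [phi_pathGraph_seven]; norm_num) (step 7)
  · obtain ⟨j, rfl⟩ : ∃ j, k = j + 8 + 4 := ⟨k - 12, by omega⟩
    have := ih (j + 8) (by omega) (by omega)
    have := step (j + 8)
    omega

/-- Deleting one vertex of a cycle leaves a path. -/
def pathGraphEmbeddingCycleGraph (k : ℕ) : pathGraph (k + 1) ↪g cycleGraph (k + 2) where
  toEmbedding := Fin.castSuccEmb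
  map_rel_iff' {i j} := by
    simp only [Fin.coe_castSuccEmb, cycleGraph_adj, sub_eq_iff_eq_add, add_comm (1 : Fin (k + 2)),
      Fin.coeSucc_eq_succ, Fin.ext_iff, Fin.val_castSucc, Fin.val_succ, pathGraph_adj]
    omega

theorem add_three_le_phi_cycleGraph {r : ℕ} (hr : 7 ≤ r) : r + 3 ≤ phi (cycleGraph r) := by
  obtain ⟨k, rfl⟩ := Nat.exists_eq_add_of_le' hr
  match k with
  | 0 => rw [phi_cycleGraph_seven]; norm_num
  | 1 => rw [phi_cycleGraph_eight]; norm_num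
  | k + 2 =>
    have := phi_le_of_embedding (pathGraphEmbeddingCycleGraph (k + 7))
    exact (add_four_le_phi_pathGraph (by omega)).trans this

end PathsAndCycles

section Hub

variable {V : Type*} {G : SimpleGraph V} {c : V}

/-- A hub: a vertex `c` on a triangle and with a further neighbour, such that deleting `c` leaves
isolated vertices and isolated edges, and every such edge contains a neighbour of `c`. The model
case is the centre of `graphU p q`. -/
structure IsHub (G : SimpleGraph V) (c : V) : Prop where
  isDissoc_compl : IsDissoc G {c}ᶜ
  not_adj : ∀ ⦃x y⦄, ¬ G.Adj c x → ¬ G.Adj c y → ¬ G.Adj x y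
  exists_adj : ∃ a b d, a ≠ d ∧ b ≠ d ∧ G.Adj c a ∧ G.Adj c b ∧ G.Adj c d ∧ G.Adj a b

/-- The set consisting of the edge `cx` and the vertices adjacent to neither of its ends: the
largest set in which `c` and `x` have no neighbours but each other. -/
def edgeStarSet (G : SimpleGraph V) (c x : V) : Set V :=
  {y | y = c ∨ y = x ∨ (¬ G.Adj c y ∧ ¬ G.Adj x y)}

theorem IsDissoc.subset_edgeStarSet {S : Set V} (hS : IsDissoc G S) {x : V} (hc : c ∈ S)
    (hx : x ∈ S) (hcx : G.Adj c x) : S ⊆ edgeStarSet G c x := by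
  intro y hy
  by_cases hcy : G.Adj c y
  · exact .inr (.inl (hS.eq_of_adj hc hy hx hcy hcx))
  · by_cases hxy : G.Adj x y
    · exact .inl (hS.eq_of_adj hx hy hc hxy hcx.symm)
    · exact .inr (.inr ⟨hcy, hxy⟩)

theorem injOn_edgeStarSet : Set.InjOn (edgeStarSet G c) (G.neighborSet c) := by
  intro x hx y hy h
  have hmem : x ∈ edgeStarSet G c y := h ▸ Or.inr (Or.inl rfl)
  rcases hmem with rfl | rfl | hmem
  · exact absurd rfl hx.ne
  · rfl
  · exact absurd hx hmem.1

namespace IsHub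

theorem deletableAt (hc : IsHub G c) {w : V} (hw : w ≠ c) : DeletableAt G w := by
  obtain ⟨a, b, d, had, hbd, ha, hb, hd, hab⟩ := hc.exists_adj
  refine ⟨{c}ᶜ, hc.isDissoc_compl, hw, fun x hx hdis => ?_⟩
  obtain rfl : x = c := by simpa using hx
  have eq_of_adj : ∀ y z, G.Adj x y → G.Adj x z → y ≠ w → z ≠ w → y = z := fun y z hy hz hyw hzw =>
    hdis.eq_of_adj (Set.mem_insert _ _) (.inr ⟨hy.ne', hyw⟩) (.inr ⟨hz.ne', hzw⟩) hy hz
  by_cases haw : a = w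
  · exact hbd (eq_of_adj b d hb hd (haw ▸ hab.ne') (haw ▸ had.symm))
  · by_cases hbw : b = w
    · exact had (eq_of_adj a d ha hd haw (hbw ▸ hbd.symm))
    · exact hab.ne (eq_of_adj a b ha hb haw hbw)

theorem isMaxDissoc_compl (hc : IsHub G c) : IsMaxDissoc G {c}ᶜ := by
  obtain ⟨a, b, d, had, -, ha, -, hd, -⟩ := hc.exists_adj
  refine isMaxDissoc_iff_forall_insert.2 ⟨hc.isDissoc_compl, fun x hx hdis => had ?_⟩
  obtain rfl : x = c := by simpa using hx
  exact hdis.eq_of_adj (Set.mem_insert _ _) (.inr ha.ne') (.inr hd.ne') ha hd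

theorem isMaxDissoc_edgeStarSet (hc : IsHub G c) {x : V} (hcx : G.Adj c x) :
    IsMaxDissoc G (edgeStarSet G c x) := by
  have hdis : IsDissoc G (edgeStarSet G c x) := by
    refine ((isDissoc_pair G c x).union (T := {y | ¬ G.Adj c y ∧ ¬ G.Adj x y}) ?_ ?_).mono ?_
    · exact fun v hv y hy => absurd hy.2 (hc.not_adj hv.1 hy.1.1)
    · rintro v (rfl | rfl) y hy
      exacts [hy.1, hy.2]
    · rintro y (hy | hy | hy)
      exacts [.inl (.inl hy), .inl (.inr hy), .inr hy]
  exact ⟨hdis, fun T hT hsub => hsub.antisymm <|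
    hT.subset_edgeStarSet (hsub (.inl rfl)) (hsub (.inr (.inl rfl))) hcx⟩

theorem exists_adj_of_mem (hc : IsHub G c) {S : Set V} (hS : IsMaxDissoc G S) (hcS : c ∈ S) :
    ∃ x ∈ S, G.Adj c x := by
  by_contra! hno
  obtain ⟨a, b, -, -, -, ha, hb, -, hab⟩ := hc.exists_adj
  have haS : a ∉ S := fun h => hno a h ha
  refine (isMaxDissoc_iff_forall_insert.1 hS).2 a haS (hS.1.insert (y := c) fun x hx hax => ?_)
  obtain rfl : x = c := by
    by_contra hxc
    obtain rfl : x = b := hc.isDissoc_compl.eq_of_adj ha.ne' hxc hb.ne' hax hab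
    exact hno x hx hb
  exact ⟨rfl, hno⟩

theorem setOf_isMaxDissoc (hc : IsHub G c) :
    {S | IsMaxDissoc G S} = insert {c}ᶜ (edgeStarSet G c '' G.neighborSet c) := by
  refine Set.Subset.antisymm (fun S hS => ?_) (Set.insert_subset hc.isMaxDissoc_compl ?_)
  · by_cases hcS : c ∈ S
    · obtain ⟨x, hx, hcx⟩ := hc.exists_adj_of_mem hS hcS
      exact .inr ⟨x, hcx, (hS.2 _ (hc.isMaxDissoc_edgeStarSet hcx).1
        (hS.1.subset_edgeStarSet hcS hx hcx)).symm⟩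
    · exact .inl (hS.2 _ hc.isDissoc_compl (Set.subset_compl_singleton_iff.2 hcS))
  · exact Set.image_subset_iff.2 fun x => hc.isMaxDissoc_edgeStarSet

theorem phi_eq [Finite V] (hc : IsHub G c) : phi G = (G.neighborSet c).ncard + 1 := by
  have hnot : {c}ᶜ ∉ edgeStarSet G c '' G.neighborSet c := by
    rintro ⟨x, -, hx⟩
    have : c ∈ edgeStarSet G c x := .inl rfl
    rw [hx] at this
    exact this rfl
  rw [phi, hc.setOf_isMaxDissoc, Set.ncard_insert_of_notMem hnot, injOn_edgeStarSet.ncard_image]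

end IsHub

end Hub

section GraphU

variable {p q : ℕ} {h : q ≤ p}

@[simp]
theorem graphU_adj_center_triangle {z : Unit} {i : Fin 2} :
    (graphU p q h).Adj (.inl z) (.inr (.inl i)) := by
  fin_cases i <;> simp [graphU]

@[simp]
theorem graphU_adj_center_leg {z : Unit} {i : Fin p} :
    (graphU p q h).Adj (.inl z) (.inr (.inr (.inl i))) := by
  simp [graphU]

@[simp]
theorem not_graphU_adj_center_leaf {z : Unit} {j : Fin q} :
    ¬ (graphU p q h).Adj (.inl z) (.inr (.inr (.inr j))) := by
  simp [graphU]

@[simp]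
theorem graphU_adj_inr_center {x : Fin 2 ⊕ Fin p ⊕ Fin q} {z : Unit} :
    (graphU p q h).Adj (.inr x) (.inl z) ↔ (graphU p q h).Adj (.inl z) (.inr x) :=
  adj_comm ..

@[simp]
theorem graphU_adj_triangle_triangle {i j : Fin 2} :
    (graphU p q h).Adj (.inr (.inl i)) (.inr (.inl j)) ↔ i ≠ j := by
  fin_cases i <;> fin_cases j <;> simp [graphU]

@[simp]
theorem not_graphU_adj_triangle_inr {i : Fin 2} {j : Fin p ⊕ Fin q} :
    ¬ (graphU p q h).Adj (.inr (.inl i)) (.inr (.inr j)) := by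
  simp [graphU]

@[simp]
theorem not_graphU_adj_inr_triangle {i : Fin 2} {j : Fin p ⊕ Fin q} :
    ¬ (graphU p q h).Adj (.inr (.inr j)) (.inr (.inl i)) := by
  simp [graphU]

@[simp]
theorem not_graphU_adj_leg_leg {i j : Fin p} :
    ¬ (graphU p q h).Adj (.inr (.inr (.inl i))) (.inr (.inr (.inl j))) := by
  simp [graphU]

@[simp]
theorem graphU_adj_leg_leaf {i : Fin p} {j : Fin q} :
    (graphU p q h).Adj (.inr (.inr (.inl i))) (.inr (.inr (.inr j))) ↔ i = Fin.castLE h j := by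
  simp [graphU]

@[simp]
theorem graphU_adj_leaf_leg {i : Fin p} {j : Fin q} :
    (graphU p q h).Adj (.inr (.inr (.inr j))) (.inr (.inr (.inl i))) ↔ i = Fin.castLE h j := by
  rw [adj_comm, graphU_adj_leg_leaf]

@[simp]
theorem not_graphU_adj_leaf_leaf {i j : Fin q} :
    ¬ (graphU p q h).Adj (.inr (.inr (.inr i))) (.inr (.inr (.inr j))) := by
  simp [graphU]

theorem isHub_graphU (hp : 0 < p) : IsHub (graphU p q h) (.inl ()) where
  isDissoc_compl := by
    rintro (v | v | v | v) hv (x | x | x | x) ⟨hx, hvx⟩ (y | y | y | y) ⟨hy, hvy⟩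
    case inr.inl.inr.inl.inr.inl =>
      rw [graphU_adj_triangle_triangle] at hvx hvy
      rw [show x = y by omega]
    all_goals simp_all [(Fin.castLE_injective h).eq_iff]
  not_adj := by
    rintro (x | x | x | x) (y | y | y | y) <;> simp
  exists_adj := ⟨.inr (.inl 0), .inr (.inl 1), .inr (.inr (.inl ⟨0, hp⟩)), by simp⟩

theorem neighborSet_graphU_center : (graphU p q h).neighborSet (.inl ()) =
    Set.range (Sum.inr ∘ Sum.map id Sum.inl) := by
  ext (x | x | x | x) <;> simp

theorem phi_graphU (hp : 0 < p) : phi (graphU p q h) = p + 3 := by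
  have hinj : (Sum.inr ∘ Sum.map id Sum.inl :
      Fin 2 ⊕ Fin p → Unit ⊕ Fin 2 ⊕ Fin p ⊕ Fin q).Injective :=
    Sum.inr_injective.comp (Function.injective_id.sumMap Sum.inl_injective)
  rw [(isHub_graphU hp).phi_eq, neighborSet_graphU_center, Set.ncard_range_of_injective hinj]
  simp only [Nat.card_eq_fintype_card, Fintype.card_sum, Fintype.card_fin]
  omega

end GraphU

section PendantPairs

variable {V W : Type*} {G : SimpleGraph V} {H : SimpleGraph W}

/-- The vertex `u` is a leaf of `G` attached to `w`. -/
def IsPendant (G : SimpleGraph V) (u w : V) : Prop :=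
  ∀ x, G.Adj u x ↔ x = w

/-- A pendant pair `u, v` at `w`: the edge `vw` is the only edge at `v` apart from a possible edge
`uv`, and `u` is a leaf attached to `v` or to `w`. Thus `w v u` is a pendant path of length two, or
`u` and `v` are twin leaves at `w`. -/
structure IsPendantPair (G : SimpleGraph V) (u v w : V) : Prop where
  ne : u ≠ v
  ne_right : u ≠ w
  exists_isPendant : ∃ y, (y = v ∨ y = w) ∧ IsPendant G u y
  adj_iff : ∀ x, x ≠ u → (G.Adj v x ↔ x = w)

namespace IsPendantPair

variable {u v w : V}

theorem adj (h : IsPendantPair G u v w) : G.Adj v w :=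
  (h.adj_iff w h.ne_right.symm).2 rfl

theorem notMem_of_isDissoc (h : IsPendantPair G u v w) {S : Set V} (hS : IsDissoc G S)
    (hu : u ∈ S) (hv : v ∈ S) : w ∉ S := by
  intro hw
  obtain ⟨y, rfl | rfl, hy⟩ := h.exists_isPendant
  · exact h.ne_right (hS.eq_of_adj hv hu hw ((hy y).2 rfl).symm h.adj)
  · exact h.ne (hS.eq_of_adj hw hu hv ((hy y).2 rfl).symm h.adj.symm)

theorem isDissoc_exchange (h : IsPendantPair G u v w) {S : Set V} (hS : IsDissoc G S)
    (hv : v ∈ S) (hw : w ∈ S) : IsDissoc G (insert u (S \ {v})) := by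
  obtain ⟨y, hyvw, hy⟩ := h.exists_isPendant
  refine (hS.mono Set.sdiff_subset).insert (y := y) fun x hx hux => ?_
  obtain rfl : x = y := (hy x).1 hux
  obtain rfl : x = w := hyvw.resolve_left hx.2
  exact ⟨rfl, fun z hz hxz => hz.2 (hS.eq_of_adj hw hz.1 hv hxz h.adj.symm)⟩

theorem isDissoc_union_pair (h : IsPendantPair G u v w) {S : Set V} (hS : IsDissoc G S)
    (hw : w ∉ S) : IsDissoc G (S ∪ {u, v}) := by
  rw [← Set.sdiff_union_self]
  refine (hS.mono Set.sdiff_subset).union (isDissoc_pair G u v) ?_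
  obtain ⟨y, hyvw, hy⟩ := h.exists_isPendant
  rintro x ⟨hxS, hxuv⟩ z (rfl | rfl) hxz
  · obtain rfl : x = y := (hy x).1 hxz.symm
    rcases hyvw with rfl | rfl
    exacts [hxuv (.inr rfl), hw hxS]
  · obtain rfl : x = w := (h.adj_iff x fun hxu => hxuv (.inl hxu)).1 hxz.symm
    exact hw hxS

theorem exists_isMaxDissoc_superset [Finite V] (h : IsPendantPair G u v w) {S : Set V}
    (hS : IsDissoc G S) (hv : v ∉ S) :
    ∃ T, IsMaxDissoc G T ∧ S ⊆ T ∧ ¬ (v ∈ T ∧ w ∈ T) := by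
  by_cases hu : IsDissoc G (insert u S)
  · obtain ⟨T, hT, hsub⟩ := hu.exists_isMaxDissoc_superset
    have huT : u ∈ T := hsub (Set.mem_insert u S)
    exact ⟨T, hT, (Set.subset_insert u S).trans hsub,
      fun hvw => h.notMem_of_isDissoc hT.1 huT hvw.1 hvw.2⟩
  · obtain ⟨T, hT, hsub⟩ := hS.exists_isMaxDissoc_superset
    refine ⟨T, hT, hsub, fun hvw => hu ((h.isDissoc_exchange hT.1 hvw.1 hvw.2).mono ?_)⟩
    exact Set.insert_subset_insert (Set.subset_sdiff_singleton hsub hv)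

variable [Finite V] {f : H ↪g G}

theorem phi_add_ncard_le (h : IsPendantPair G u v w) (hv : v ∉ Set.range f) {N : Set (Set V)}
    (hN : ∀ T ∈ N, IsMaxDissoc G T ∧ ((v ∈ T ∧ w ∈ T) ∨ ¬ IsMaxDissoc H (f ⁻¹' T))) :
    phi H + N.ncard ≤ phi G := by
  refine _root_.phi_add_ncard_le f (fun T hT => (hN T hT).1) fun S hS => ?_
  obtain ⟨T, hT, hsub, hvw⟩ := h.exists_isMaxDissoc_superset (hS.1.image f)
    fun hv' => hv (Set.image_subset_range f S hv')
  refine ⟨T, hT, hsub, fun hTN => ((hN T hTN).2.resolve_left hvw) ?_⟩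
  rwa [hS.preimage_eq f hT.1 hsub]

theorem phi_add_one_le (h : IsPendantPair G u v w) (hv : v ∉ Set.range f) : phi H + 1 ≤ phi G := by
  obtain ⟨T, hT, hvw⟩ := (isDissoc_pair G v w).exists_isMaxDissoc_superset
  rw [← Set.ncard_singleton T]
  refine h.phi_add_ncard_le hv ?_
  rintro _ rfl
  exact ⟨hT, .inl ⟨hvw (by simp), hvw (by simp)⟩⟩

theorem phi_add_two_le (h : IsPendantPair G u v w) (hv : v ∉ Set.range f) {T : Set V}
    (hT : IsMaxDissoc G T) (hvw : ¬ (v ∈ T ∧ w ∈ T)) (htrace : ¬ IsMaxDissoc H (f ⁻¹' T)) :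
    phi H + 2 ≤ phi G := by
  obtain ⟨T', hT', hvw'⟩ := (isDissoc_pair G v w).exists_isMaxDissoc_superset
  have hmem : v ∈ T' ∧ w ∈ T' := ⟨hvw' (by simp), hvw' (by simp)⟩
  have hne : T ≠ T' := by
    rintro rfl
    exact hvw hmem
  rw [← Set.ncard_pair hne]
  refine h.phi_add_ncard_le hv ?_
  rintro _ (rfl | rfl)
  exacts [⟨hT, .inr htrace⟩, ⟨hT', .inl hmem⟩]

theorem phi_add_two_le_of_deletableAt {z : W} (h : IsPendantPair G u v (f z))
    (hv : v ∉ Set.range f) (hz : DeletableAt H z) : phi H + 2 ≤ phi G := by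
  obtain ⟨S, hS, hzS, hmax⟩ := hz
  have hfz : f z ∉ f '' (S \ {z}) := by simp
  obtain ⟨T, hT, hsub⟩ := (h.isDissoc_union_pair ((hS.mono Set.sdiff_subset).image f)
    hfz).exists_isMaxDissoc_superset
  have hzT : f z ∉ T := h.notMem_of_isDissoc hT.1 (hsub (by simp)) (hsub (by simp))
  refine h.phi_add_two_le hv hT (fun hvw => hzT hvw.2) fun htrace => hzT ?_
  have hTS : f ⁻¹' T ⊆ S := by
    intro x hx
    by_contra hxS
    exact hmax x hxS (htrace.1.mono <| Set.insert_subset hx <|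
      Set.image_subset_iff.1 (Set.subset_union_left.trans hsub))
  exact (htrace.2 S hS hTS).symm.subset hzS

theorem phi_add_two_le_of_forall_exists_adj {z : W} (h : IsPendantPair G u v (f z))
    (hu : u ∉ Set.range f) (hv : v ∉ Set.range f) (huz : G.Adj u (f z))
    (hz : ∀ S, IsMaxDissoc H S → z ∈ S → ∃ x ∈ S, H.Adj z x) : phi H + 2 ≤ phi G := by
  obtain ⟨T, hT, hsub⟩ := (isDissoc_pair G u (f z)).exists_isMaxDissoc_superset
  have huT : u ∈ T := hsub (by simp)
  have hzT : f z ∈ T := hsub (by simp)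
  refine h.phi_add_two_le hv hT (fun hvw => h.notMem_of_isDissoc hT.1 huT hvw.1 hvw.2)
    fun htrace => ?_
  obtain ⟨x, hx, hzx⟩ := hz _ htrace hzT
  exact hu ⟨x, hT.1.eq_of_adj hzT hx huT (f.map_rel_iff.2 hzx) huz.symm⟩

end IsPendantPair

end PendantPairs

section Reduction

variable {V W : Type*} {G : SimpleGraph V} {H : SimpleGraph W} {u v w : V}

theorem IsPendant.degree_eq_one (h : IsPendant G u w) [Fintype (G.neighborSet u)] :
    G.degree u = 1 :=
  degree_eq_one_iff_existsUnique_adj.2 ⟨w, (h w).2 rfl, fun x => (h x).1⟩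

variable [Fintype V]

theorem IsUnicyclic.induce_compl_singleton (hG : IsUnicyclic G) (hu : IsPendant G u w)
    [Fintype ({u}ᶜ : Set V)] : IsUnicyclic (G.induce {u}ᶜ) := by
  classical
  refine ⟨hG.1.induce_compl_singleton_of_degree_eq_one hu.degree_eq_one, ?_⟩
  have hedges : (G.induce {u}ᶜ).edgeSet.ncard = G.edgeSet.ncard - 1 := by
    simpa only [← Set.ncard_coe_finset, coe_edgeFinset, hu.degree_eq_one] using
      (G.card_edgeFinset_induce_compl_singleton u).trans (G.card_edgeFinset_deleteIncidenceSet u)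
  rw [hedges, hG.2, Fintype.card_compl_set, Fintype.card_unique (α := ({u} : Set V))]

theorem IsUnicyclic.of_iso [Fintype W] (e : G ≃g H) (hG : IsUnicyclic G) : IsUnicyclic H := by
  refine ⟨e.connected_iff.1 hG.1, ?_⟩
  rw [← Fintype.card_congr e.toEquiv, ← hG.2, ← Nat.card_coe_set_eq, ← Nat.card_coe_set_eq]
  exact (Nat.card_congr e.mapEdgeSet).symm

theorem IsUnicyclic.induce_compl_pair (hG : IsUnicyclic G) (h : IsPendantPair G u v w)
    [Fintype ({u, v}ᶜ : Set V)] : IsUnicyclic (G.induce {u, v}ᶜ) := by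
  classical
  obtain ⟨y, -, hy⟩ := h.exists_isPendant
  have hv : IsPendant (G.induce {u}ᶜ) ⟨v, h.ne.symm⟩ ⟨w, h.ne_right.symm⟩ := fun x => by
    rw [Subtype.ext_iff]
    exact h.adj_iff x x.2
  let f := (Embedding.induce (G := G) {u}ᶜ).comp
    (Embedding.induce ({⟨v, h.ne.symm⟩}ᶜ : Set ({u}ᶜ : Set V)))
  have hrange : Set.range f = {u, v}ᶜ := by
    change Set.range (Subtype.val ∘ Subtype.val) = _
    rw [Set.range_comp, Subtype.range_val]
    ext x
    simp
  have hf : IsUnicyclic (G.induce (Set.range f)) :=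
    ((hG.induce_compl_singleton hy).induce_compl_singleton hv).of_iso f.isoInduceRange
  convert hf <;> exact hrange.symm

end Reduction

section PendantPath

variable {V W : Type*} {G : SimpleGraph V} {H : SimpleGraph W} {w : W}

@[simp]
theorem addPath2_adj_inl_inl {x y : W} : (addPath2 H w).Adj (.inl x) (.inl y) ↔ H.Adj x y := by
  simp only [addPath2, fromRel_adj, Sum.inl.injEq, reduceCtorEq, and_false, or_false,
    exists_and_left, exists_eq_left', ne_eq, H.adj_comm y x, or_self]
  exact and_iff_right_of_imp Adj.ne

@[simp]
theorem addPath2_adj_inl_inr {x : W} {i : Fin 2} :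
    (addPath2 H w).Adj (.inl x) (.inr i) ↔ x = w ∧ i = 0 := by
  simp [addPath2]

@[simp]
theorem addPath2_adj_inr_inl {x : W} {i : Fin 2} :
    (addPath2 H w).Adj (.inr i) (.inl x) ↔ x = w ∧ i = 0 := by
  rw [adj_comm, addPath2_adj_inl_inr]

@[simp]
theorem addPath2_adj_inr_inr {i j : Fin 2} : (addPath2 H w).Adj (.inr i) (.inr j) ↔ i ≠ j := by
  fin_cases i <;> fin_cases j <;> simp [addPath2]

theorem IsPendantPair.nonempty_iso_addPath2 {f : H ↪g G} {u v : V}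
    (h : IsPendantPair G u v (f w)) (huv : G.Adj u v) (hrange : Set.range f = {u, v}ᶜ) :
    Nonempty (addPath2 H w ≃g G) := by
  have hu : IsPendant G u v := by
    obtain ⟨y, -, hy⟩ := h.exists_isPendant
    rwa [(hy v).1 huv]
  have hfu (x : W) : f x ≠ u := fun hx => by simpa [hx] using hrange.subset ⟨x, rfl⟩
  have hfv (x : W) : f x ≠ v := fun hx => by simpa [hx] using hrange.subset ⟨x, rfl⟩
  have hinj : Function.Injective (Sum.elim f ![v, u]) := by
    refine f.injective.sumElim ?_ fun x i => ?_
    · simp [Function.Injective, Fin.forall_fin_two, h.ne, h.ne.symm]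
    · fin_cases i
      exacts [hfv x, hfu x]
  have hsurj : Function.Surjective (Sum.elim f ![v, u]) := by
    rw [← Set.range_eq_univ, Set.Sum.elim_range, hrange, Matrix.range_cons_cons_empty,
      Set.pair_comm, Set.compl_union_self]
  let e : addPath2 H w ↪g G := ⟨⟨_, hinj⟩, by
    have hadj_u (x : V) : G.Adj x u ↔ x = v := by rw [adj_comm, hu x]
    have hadj_v (x : W) : G.Adj v (f x) ↔ x = w := by
      rw [h.adj_iff _ (hfu x), f.injective.eq_iff]
    rintro (x | i) (y | j)
    · simp
    · fin_cases j <;> simp [adj_comm _ _ v, hadj_v, hadj_u, hfv]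
    · fin_cases i <;> simp [hadj_v, hu _, hfv]
    · fin_cases i <;> fin_cases j <;> simp [huv, huv.symm]⟩
  exact ⟨RelIso.ofSurjective e hsurj⟩

theorem nonempty_addPath2_graphU_iso {p q : ℕ} (h : q ≤ p) :
    Nonempty (addPath2 (graphU p q h) (.inl ()) ≃g
      graphU (p + 1) (q + 1) (Nat.succ_le_succ h)) := by
  let e : (Unit ⊕ Fin 2 ⊕ Fin p ⊕ Fin q) ⊕ Fin 2 → Unit ⊕ Fin 2 ⊕ Fin (p + 1) ⊕ Fin (q + 1) :=
    Sum.elim (Sum.map id (Sum.map id (Sum.map Fin.succ Fin.succ)))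
      ![.inr (.inr (.inl 0)), .inr (.inr (.inr 0))]
  have hinj : e.Injective := by
    refine (Function.injective_id.sumMap (Function.injective_id.sumMap
      ((Fin.succ_injective p).sumMap (Fin.succ_injective q)))).sumElim ?_ ?_
    · simp [Function.Injective, Fin.forall_fin_two]
    · rintro (x | x | x | x) i <;> fin_cases i <;> simp [Fin.succ_ne_zero]
  have hbij : e.Bijective := by
    refine (Fintype.bijective_iff_injective_and_card e).2 ⟨hinj, ?_⟩
    simp only [Fintype.card_sum, Fintype.card_fin]
    omega
  let f : addPath2 (graphU p q h) (.inl ()) ↪g graphU (p + 1) (q + 1) (Nat.succ_le_succ h) :=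
    ⟨⟨e, hinj⟩, by
      have hsucc (j : Fin q) :
          Fin.castLE (Nat.succ_le_succ h) j.succ = (Fin.castLE h j).succ := rfl
      rintro (x | i) (y | j)
      · rcases x with x | x | x | x <;> rcases y with y | y | y | y <;> simp [e, hsucc]
      · rcases x with x | x | x | x <;> fin_cases j <;>
          simp [e, (Fin.succ_ne_zero _).symm]
      · rcases y with y | y | y | y <;> fin_cases i <;>
          simp [e, (Fin.succ_ne_zero _).symm]
      · fin_cases i <;> fin_cases j <;> simp [e]⟩
  exact ⟨RelIso.ofSurjective f hbij.2⟩

end PendantPath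

section PhiExtremal

variable {V W : Type*} {G : SimpleGraph V} {H : SimpleGraph W}

/-- The unicyclic graphs of order `2 * q + 4` with the smallest number of maximal dissociation sets,
`q + 4`: the graph `U(q + 1, q)` and three sporadic graphs of orders 6, 6 and 8. -/
def IsPhiExtremal (q : ℕ) (G : SimpleGraph V) : Prop :=
  Nonempty (G ≃g graphU (q + 1) q (Nat.le_succ q)) ∨
  (q = 1 ∧ (Nonempty (G ≃g cycleGraph 6) ∨ Nonempty (G ≃g graphUrt 5 1 (by omega)))) ∨
  (q = 2 ∧ Nonempty (G ≃g graphUrt 4 4 (by omega)))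

theorem IsPhiExtremal.phi_eq [Finite V] {q : ℕ} (hG : IsPhiExtremal q G) : phi G = q + 4 := by
  rcases hG with ⟨⟨e⟩⟩ | ⟨rfl, ⟨⟨e⟩⟩ | ⟨⟨e⟩⟩⟩ | ⟨rfl, ⟨e⟩⟩
  · rw [phi_eq_of_iso e, phi_graphU q.succ_pos]
  · rw [phi_eq_of_iso e, phi_cycleGraph_six]
  · rw [phi_eq_of_iso e, phi_graphUrt_five_one]
  · rw [phi_eq_of_iso e, phi_graphUrt_four_four]

namespace IsPendantPair

variable [Finite V] {f : H ↪g G} {u v : V} {w : W}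

theorem nonempty_iso_graphU_or_phi_add_two_le {p q : ℕ} {h : q ≤ p} (hp : 0 < p)
    {f : graphU p q h ↪g G} {w : Unit ⊕ Fin 2 ⊕ Fin p ⊕ Fin q}
    (huvw : IsPendantPair G u v (f w)) (hrange : Set.range f = {u, v}ᶜ) :
    Nonempty (G ≃g graphU (p + 1) (q + 1) (Nat.succ_le_succ h)) ∨
      phi (graphU p q h) + 2 ≤ phi G := by
  have hu : u ∉ Set.range f := by simp [hrange]
  have hv : v ∉ Set.range f := by simp [hrange]
  have hhub : IsHub (graphU p q h) (.inl ()) := isHub_graphU hp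
  by_cases hw : w = .inl ()
  · subst hw
    by_cases huv : G.Adj u v
    · obtain ⟨e⟩ := huvw.nonempty_iso_addPath2 huv hrange
      obtain ⟨e'⟩ := nonempty_addPath2_graphU_iso h
      exact .inl ⟨e.symm.trans e'⟩
    · obtain ⟨y, rfl | rfl, hy⟩ := huvw.exists_isPendant
      · exact absurd ((hy _).2 rfl) huv
      · exact .inr (huvw.phi_add_two_le_of_forall_exists_adj hu hv ((hy _).2 rfl)
          fun S => hhub.exists_adj_of_mem)
  · exact .inr (huvw.phi_add_two_le_of_deletableAt hv (hhub.deletableAt hw))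

theorem isPhiExtremal_succ_or_phi_add_two_le {q : ℕ} (huvw : IsPendantPair G u v (f w))
    (hrange : Set.range f = {u, v}ᶜ) (hH : IsPhiExtremal q H) :
    IsPhiExtremal (q + 1) G ∨ phi H + 2 ≤ phi G := by
  have hrange_comp {X : Type} {H' : SimpleGraph X} (e : H ≃g H') :
      Set.range (f.comp e.symm.toEmbedding) = {u, v}ᶜ :=
    (e.symm.surjective.range_comp f).trans hrange
  have hdeletable {X : Type} {H' : SimpleGraph X} (e : H ≃g H') (hH' : DeletableAt H' (e w)) :
      phi H + 2 ≤ phi G := by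
    have : Finite W := .of_injective f f.injective
    have : Finite X := .of_equiv W e.toEquiv
    rw [phi_eq_of_iso e]
    refine phi_add_two_le_of_deletableAt (f := f.comp e.symm.toEmbedding) (u := u) (v := v)
      ?_ ?_ hH'
    · simpa using huvw
    · rw [hrange_comp]; simp
  rcases hH with ⟨⟨e⟩⟩ | ⟨-, ⟨⟨e⟩⟩ | ⟨⟨e⟩⟩⟩ | ⟨-, ⟨e⟩⟩
  · rw [phi_eq_of_iso e]
    refine (nonempty_iso_graphU_or_phi_add_two_le (f := f.comp e.symm.toEmbedding) (w := e w)
      q.succ_pos ?_ (hrange_comp e)).imp_left .inl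
    simpa using huvw
  · exact .inr (hdeletable e (deletableAt_cycleGraph_six _))
  · exact .inr (hdeletable e (deletableAt_graphUrt_five_one _))
  · exact .inr (hdeletable e (deletableAt_graphUrt_four_four _))

theorem isPhiExtremal_or_lt_phi {q : ℕ} (huvw : IsPendantPair G u v (f w))
    (hrange : Set.range f = {u, v}ᶜ) (hH : IsPhiExtremal q H ∨ q + 4 < phi H) :
    IsPhiExtremal (q + 1) G ∨ q + 5 < phi G := by
  rcases hH with hH | hH
  · have : Finite W := .of_injective f f.injective
    have := hH.phi_eq
    exact (huvw.isPhiExtremal_succ_or_phi_add_two_le hrange hH).imp_right (by omega)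
  · have := huvw.phi_add_one_le (f := f) (by simp [hrange])
    exact .inr (by omega)

end IsPendantPair

end PhiExtremal

section Reduced

open scoped Finset

variable {V : Type*} {G : SimpleGraph V}

theorem eq_univ_of_connected_of_adj_closed (hG : G.Connected) {S : Set V} (hne : S.Nonempty)
    (hS : ∀ x ∈ S, ∀ y, G.Adj x y → y ∈ S) : S = Set.univ := by
  obtain ⟨x, hx⟩ := hne
  refine Set.eq_univ_of_forall fun y => ?_
  by_contra hy
  obtain ⟨p⟩ := hG.preconnected x y
  obtain ⟨d, -, hfst, hsnd⟩ := p.exists_boundary_dart S hx hy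
  exact hsnd (hS _ hfst _ d.adj)

variable [Fintype V]

theorem IsUnicyclic.exists_copy_cycleGraph (hG : IsUnicyclic G) :
    ∃ r, 3 ≤ r ∧ Nonempty (Copy (cycleGraph r) G) := by
  classical
  have hcyclic : ¬ G.IsAcyclic := fun h => by
    have htree := (IsTree.mk hG.1 h).card_edgeFinset
    have hedges := hG.2
    rw [← coe_edgeFinset, Set.ncard_coe_finset] at hedges
    omega
  simpa only [isAcyclic_iff_free_cycleGraph, Free, IsContained, not_forall, not_not, exists_prop]
    using hcyclic

theorem IsUnicyclic.three_le_card (hG : IsUnicyclic G) : 3 ≤ Fintype.card V := by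
  obtain ⟨r, hr, ⟨f⟩⟩ := hG.exists_copy_cycleGraph
  exact hr.trans (Fintype.card_fin r ▸ Fintype.card_le_of_injective f f.injective)

variable [DecidableRel G.Adj]

theorem isPendant_of_degree_eq_one {u w : V} (hu : G.degree u = 1) (huw : G.Adj u w) :
    IsPendant G u w := by
  obtain ⟨z, -, hz⟩ := degree_eq_one_iff_existsUnique_adj.1 hu
  intro x
  rw [hz w huw]
  exact ⟨hz x, fun h => h ▸ hz w huw ▸ huw⟩

theorem IsUnicyclic.degree_ne_one_of_adj (hG : IsUnicyclic G) {u v : V} (huv : G.Adj u v)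
    (hu : G.degree u = 1) : G.degree v ≠ 1 := by
  intro hv
  have huniv : ({u, v} : Set V) = Set.univ := by
    refine eq_univ_of_connected_of_adj_closed hG.1 (Set.insert_nonempty u _) ?_
    rintro x (rfl | rfl) y hxy
    · exact .inr ((isPendant_of_degree_eq_one hu huv y).1 hxy)
    · exact .inl ((isPendant_of_degree_eq_one hv huv.symm y).1 hxy)
  have hpair := Set.ncard_pair huv.ne
  rw [huniv, Set.ncard_univ, Nat.card_eq_fintype_card] at hpair
  have := hG.three_le_card
  omega

theorem IsUnicyclic.sum_degree (hG : IsUnicyclic G) :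
    ∑ v, G.degree v = ∑ _v : V, 2 := by
  classical
  rw [sum_degrees_eq_twice_card_edges, ← Set.ncard_coe_finset, coe_edgeFinset, hG.2,
    Finset.sum_const, Finset.card_univ, smul_eq_mul, mul_comm]

theorem sum_card_filter_degree_eq_one :
    ∑ v, #{u ∈ G.neighborFinset v | G.degree u = 1} = #{u | G.degree u = 1} := by
  calc ∑ v, #{u ∈ G.neighborFinset v | G.degree u = 1}
      = ∑ v, #(Finset.bipartiteAbove G.Adj {u | G.degree u = 1} v) := by
        refine Finset.sum_congr rfl fun v _ => congrArg Finset.card ?_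
        ext u
        simp [Finset.bipartiteAbove, and_comm]
    _ = ∑ u with G.degree u = 1, #(Finset.bipartiteBelow G.Adj Finset.univ u) :=
        Finset.sum_card_bipartiteAbove_eq_sum_card_bipartiteBelow _
    _ = ∑ u with G.degree u = 1, G.degree u := by
        refine Finset.sum_congr rfl fun u _ => congrArg Finset.card ?_
        ext v
        simp [Finset.bipartiteBelow, adj_comm]
    _ = #{u | G.degree u = 1} := by
        rw [Finset.card_eq_sum_ones]
        exact Finset.sum_congr rfl fun u hu => (Finset.mem_filter.1 hu).2

theorem card_filter_degree_eq_one_add_card_filter_degree_ne_one (v : V) :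
    #{u ∈ G.neighborFinset v | G.degree u = 1} + #{u ∈ G.neighborFinset v | G.degree u ≠ 1} =
      G.degree v := by
  rw [← card_neighborFinset_eq_degree]
  exact Finset.card_filter_add_card_filter_not _

theorem card_filter_degree_eq_one_le_one (hred : ∀ u v w, ¬ IsPendantPair G u v w) (v : V) :
    #{u ∈ G.neighborFinset v | G.degree u = 1} ≤ 1 := by
  refine Finset.card_le_one.2 fun a ha b hb => ?_
  rw [Finset.mem_filter, mem_neighborFinset] at ha hb
  by_contra hab
  exact hred a b v ⟨hab, ha.1.ne', ⟨v, .inr rfl, isPendant_of_degree_eq_one ha.2 ha.1.symm⟩,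
    fun x _ => isPendant_of_degree_eq_one hb.2 hb.1.symm x⟩

theorem IsUnicyclic.two_le_card_filter_degree_ne_one (hG : IsUnicyclic G)
    (hred : ∀ u v w, ¬ IsPendantPair G u v w) {v : V} (hv : G.degree v ≠ 1) :
    2 ≤ #{u ∈ G.neighborFinset v | G.degree u ≠ 1} := by
  have : Nontrivial V := Fintype.one_lt_card_iff_nontrivial.1 (by have := hG.three_le_card; omega)
  have hpos := hG.1.preconnected.degree_pos_of_nontrivial v
  have hleaf := card_filter_degree_eq_one_le_one hred v
  have hsplit := card_filter_degree_eq_one_add_card_filter_degree_ne_one (G := G) v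
  by_contra! hlt
  obtain ⟨u, hu⟩ := Finset.card_eq_one.1
    (show #{u ∈ G.neighborFinset v | G.degree u = 1} = 1 by omega)
  obtain ⟨w, hw⟩ := Finset.card_eq_one.1
    (show #{u ∈ G.neighborFinset v | G.degree u ≠ 1} = 1 by omega)
  simp only [Finset.ext_iff, Finset.mem_filter, mem_neighborFinset, Finset.mem_singleton] at hu hw
  obtain ⟨hvu, hu1⟩ := (hu u).2 rfl
  obtain ⟨hvw, hw1⟩ := (hw w).2 rfl
  refine hred u v w ⟨hvu.ne', fun h => hw1 (h ▸ hu1),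
    ⟨v, .inl rfl, isPendant_of_degree_eq_one hu1 hvu.symm⟩, fun x hxu => ⟨fun hvx => ?_, ?_⟩⟩
  · exact (hw x).1 ⟨hvx, fun hx1 => hxu ((hu x).1 ⟨hvx, hx1⟩)⟩
  · rintro rfl
    exact hvw

theorem IsUnicyclic.card_filter_degree_ne_one_eq_two (hG : IsUnicyclic G)
    (hred : ∀ u v w, ¬ IsPendantPair G u v w) {v : V} (hv : G.degree v ≠ 1) :
    #{u ∈ G.neighborFinset v | G.degree u ≠ 1} = 2 := by
  have hle (v : V) : 2 + #{u ∈ G.neighborFinset v | G.degree u = 1} ≤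
      G.degree v + if G.degree v = 1 then 1 else 0 := by
    split_ifs with hv1
    · rw [hv1, Finset.card_eq_zero.2 (Finset.filter_eq_empty_iff.2 fun u hu =>
        hG.degree_ne_one_of_adj ((mem_neighborFinset _ _ _).1 hu) hv1)]
    · have := hG.two_le_card_filter_degree_ne_one hred hv1
      have := card_filter_degree_eq_one_add_card_filter_degree_ne_one (G := G) v
      omega
  have hsum : ∑ v, (2 + #{u ∈ G.neighborFinset v | G.degree u = 1}) =
      ∑ v, (G.degree v + if G.degree v = 1 then 1 else 0) := by
    rw [Finset.sum_add_distrib, Finset.sum_add_distrib, hG.sum_degree,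
      sum_card_filter_degree_eq_one, Finset.card_filter]
  have heq := (Finset.sum_eq_sum_iff_of_le fun v _ => hle v).1 hsum v (Finset.mem_univ v)
  rw [if_neg hv, ← card_filter_degree_eq_one_add_card_filter_degree_ne_one v] at heq
  omega

end Reduced

section CycleWithLeaves

open scoped Finset

variable {V : Type*} {G : SimpleGraph V} {r t : ℕ}

theorem nonempty_graphUrtF_iso_of_forall_isPendant (f : cycleGraph r ↪g G)
    (e : Fin t ≃ (↑(Set.range f)ᶜ : Type _)) {m : Fin t → Fin r}
    (hm : ∀ j, IsPendant G (e j) (f (m j))) : Nonempty (graphUrtF r t m ≃g G) := by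
  classical
  have hne (i : Fin r) (j : Fin t) : f i ≠ e j := fun h => (e j).2 ⟨i, h⟩
  refine ⟨⟨((Equiv.ofInjective f f.injective).sumCongr e).trans (Equiv.Set.sumCompl _), ?_⟩⟩
  rintro (i | i) (j | j)
  · simp
  · simp [adj_comm _ (f i), (hm j) _]
  · simp [(hm i) _]
  · simp [(hm i) _, (hne _ _).symm]

theorem card_map_neighborFinset_cycleGraph (hr : 3 ≤ r) (f : Copy (cycleGraph r) G) (i : Fin r) :
    #(((cycleGraph r).neighborFinset i).map f.toEmbedding) = 2 := by
  obtain ⟨k, rfl⟩ := Nat.exists_eq_add_of_le' hr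
  rw [Finset.card_map, card_neighborFinset_eq_degree, cycleGraph_degree_three_le]

variable [Fintype V] [DecidableRel G.Adj]

theorem map_neighborFinset_cycleGraph_subset (f : Copy (cycleGraph r) G) (i : Fin r) :
    ((cycleGraph r).neighborFinset i).map f.toEmbedding ⊆ G.neighborFinset (f i) := by
  intro x hx
  obtain ⟨j, hj, rfl⟩ := Finset.mem_map.1 hx
  exact (mem_neighborFinset ..).2 (f.toHom.map_adj ((mem_neighborFinset ..).1 hj))

theorem degree_ne_one_of_copy_cycleGraph (hr : 3 ≤ r) (f : Copy (cycleGraph r) G) (i : Fin r) :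
    G.degree (f i) ≠ 1 := by
  have := Finset.card_le_card (map_neighborFinset_cycleGraph_subset f i)
  rw [card_map_neighborFinset_cycleGraph hr, card_neighborFinset_eq_degree] at this
  omega

theorem IsUnicyclic.map_neighborFinset_cycleGraph (hG : IsUnicyclic G)
    (hred : ∀ u v w, ¬ IsPendantPair G u v w) (hr : 3 ≤ r) (f : Copy (cycleGraph r) G)
    (i : Fin r) : ((cycleGraph r).neighborFinset i).map f.toEmbedding =
      {u ∈ G.neighborFinset (f i) | G.degree u ≠ 1} := by
  have hdeg := degree_ne_one_of_copy_cycleGraph hr f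
  refine Finset.eq_of_subset_of_card_le (fun x hx => Finset.mem_filter.2
    ⟨map_neighborFinset_cycleGraph_subset f i hx, ?_⟩) ?_
  · obtain ⟨j, -, rfl⟩ := Finset.mem_map.1 hx
    exact hdeg j
  · rw [hG.card_filter_degree_ne_one_eq_two hred (hdeg i), card_map_neighborFinset_cycleGraph hr]

end CycleWithLeaves

section ReducedUnicyclic

variable {V : Type*} [Fintype V] {G : SimpleGraph V}

theorem IsUnicyclic.exists_embedding_cycleGraph (hG : IsUnicyclic G)
    (hred : ∀ u v w, ¬ IsPendantPair G u v w) :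
    ∃ r, 3 ≤ r ∧ ∃ f : cycleGraph r ↪g G, ∀ v ∉ Set.range f, ∃ i, IsPendant G v (f i) := by
  classical
  obtain ⟨r, hr, ⟨f⟩⟩ := hG.exists_copy_cycleGraph
  have hadj (i : Fin r) (x : V) (hx : G.degree x ≠ 1) :
      G.Adj (f i) x ↔ ∃ j, (cycleGraph r).Adj i j ∧ f j = x := by
    have := Finset.ext_iff.1 (hG.map_neighborFinset_cycleGraph hred hr f i) x
    simp only [Finset.mem_map, Finset.mem_filter, mem_neighborFinset, hx, ne_eq,
      not_false_eq_true, and_true] at this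
    exact this.symm
  have hclosed : Set.range f ∪ {v | ∃ i, IsPendant G v (f i)} = Set.univ := by
    refine eq_univ_of_connected_of_adj_closed hG.1 ⟨f ⟨0, by omega⟩, .inl ⟨_, rfl⟩⟩ ?_
    rintro _ (⟨i, rfl⟩ | ⟨i, hi⟩) y hxy
    · by_cases hy : G.degree y = 1
      · exact .inr ⟨i, isPendant_of_degree_eq_one hy hxy.symm⟩
      · obtain ⟨j, -, rfl⟩ := (hadj i y hy).1 hxy
        exact .inl ⟨j, rfl⟩
    · exact .inl ⟨i, ((hi y).1 hxy).symm⟩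
  refine ⟨r, hr, ⟨f.toEmbedding, fun {i j} => ?_⟩, fun v hv => ?_⟩
  · refine (hadj i (f j) (degree_ne_one_of_copy_cycleGraph hr f j)).trans
      ⟨fun ⟨k, hk, hkj⟩ => ?_, fun h => ⟨j, h, rfl⟩⟩
    rwa [← f.injective hkj]
  · exact (hclosed.symm.subset (Set.mem_univ v)).resolve_left hv

theorem IsUnicyclic.exists_graphUrtF_iso (hG : IsUnicyclic G)
    (hred : ∀ u v w, ¬ IsPendantPair G u v w) :
    ∃ r t, ∃ m : Fin t → Fin r, 3 ≤ r ∧ m.Injective ∧ Nonempty (graphUrtF r t m ≃g G) := by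
  classical
  obtain ⟨r, hr, f, hf⟩ := hG.exists_embedding_cycleGraph hred
  choose a ha using hf
  let e := (Fintype.equivFin (↑(Set.range f)ᶜ : Type _)).symm
  refine ⟨r, _, fun j => a (e j) (e j).2, hr, fun j j' h => ?_,
    nonempty_graphUrtF_iso_of_forall_isPendant f e fun j => ha _ _⟩
  by_contra hne
  have hpend : IsPendant G (e j') (f (a (e j) (e j).2)) :=
    (congrArg (fun i => IsPendant G (e j') (f i)) h).mpr (ha _ _)
  exact hred (e j) (e j') _ ⟨fun h => hne (e.injective (Subtype.ext h)),
    fun h => (e j).2 ⟨_, h.symm⟩, ⟨_, .inr rfl, ha _ _⟩, fun x _ => hpend x⟩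

end ReducedUnicyclic

section GraphUrtFExtremal

variable {r t t' q : ℕ} {m : Fin t → Fin r} {m' : Fin t' → Fin r}

theorem IsPhiExtremal.of_iso {V W : Type*} {G : SimpleGraph V} {H : SimpleGraph W} (e : G ≃g H)
    (hH : IsPhiExtremal q H) : IsPhiExtremal q G :=
  hH.imp (.map e.trans) (.imp (.imp_right (.imp (.map e.trans) (.map e.trans)))
    (.imp_right (.map e.trans)))

/-- The rotation of the cycle `C_{r+1}` sending the vertex `0` to `i`. -/
def cycleGraphRotate (i : Fin (r + 1)) : cycleGraph (r + 1) ≃g cycleGraph (r + 1) where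
  toEquiv := Equiv.addRight i
  map_rel_iff' := by
    rw [cycleGraph_eq_circulantGraph]
    exact circulantGraph_adj_translate

/-- The embedding of cycles with pendant vertices given by an automorphism `ρ` of the cycle and an
injection `s` of the pendant vertices which respects their attachment points. -/
def graphUrtFEmbedding (ρ : cycleGraph r ≃g cycleGraph r) (s : Fin t' ↪ Fin t)
    (h : ∀ j, ρ (m' j) = m (s j)) : graphUrtF r t' m' ↪g graphUrtF r t m where
  toEmbedding := ρ.toEmbedding.toEmbedding.sumMap s
  map_rel_iff' {a b} := by
    rcases a with i | j <;> rcases b with i' | j'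
    · simpa using ρ.map_adj_iff
    all_goals simp [← h]

theorem nonempty_graphUrtF_iso (ρ : cycleGraph r ≃g cycleGraph r) (s : Fin t' ≃ Fin t)
    (h : ∀ j, ρ (m' j) = m (s j)) : Nonempty (graphUrtF r t' m' ≃g graphUrtF r t m) :=
  ⟨RelIso.ofSurjective (graphUrtFEmbedding ρ s.toEmbedding h)
    (Sum.map_surjective.2 ⟨ρ.surjective, s.surjective⟩)⟩

theorem phi_cycleGraph_le_phi_graphUrtF : phi (cycleGraph r) ≤ phi (graphUrtF r t m) :=
  phi_le_of_embedding ⟨.inl, graphUrtF_adj_inl_inl⟩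

theorem nonempty_graphUrtF_zero_iso {m : Fin 0 → Fin r} :
    Nonempty (graphUrtF r 0 m ≃g cycleGraph r) :=
  ⟨RelIso.symm ⟨(Equiv.sumEmpty _ _).symm, graphUrtF_adj_inl_inl⟩⟩

theorem nonempty_graphUrtF_self_iso {m : Fin r → Fin r} (hm : m.Injective) :
    Nonempty (graphUrtF r r m ≃g graphUrt r r le_rfl) :=
  nonempty_graphUrtF_iso .refl (.ofBijective m (Finite.injective_iff_bijective.1 hm)) fun _ => rfl

theorem nonempty_graphUrtF_one_iso {m : Fin 1 → Fin (r + 1)} :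
    Nonempty (graphUrtF (r + 1) 1 m ≃g graphUrt (r + 1) 1 (by omega)) :=
  (nonempty_graphUrtF_iso (cycleGraphRotate (m 0)) (.refl _) fun j => by
    rw [Subsingleton.elim j 0]; exact zero_add _).map .symm

theorem nonempty_graphUrt_three_one_iso :
    Nonempty (graphUrt 3 1 (by omega) ≃g graphU 1 0 (Nat.zero_le 1)) := by
  let f : Fin 3 ⊕ Fin 1 → Unit ⊕ Fin 2 ⊕ Fin 1 ⊕ Fin 0 :=
    Sum.elim ![.inl (), .inr (.inl 0), .inr (.inl 1)] (fun i => .inr (.inr (.inl i)))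
  refine ⟨⟨.ofBijective f (by decide), ?_⟩⟩
  rintro (i | i) (j | j) <;> fin_cases i <;> fin_cases j <;>
    simp [f, graphUrt, cycleGraph_three_eq_top]

theorem phi_graphUrt_one_le_phi_graphUrtF {m : Fin t → Fin (r + 1)} (ht : 0 < t) :
    phi (graphUrt (r + 1) 1 (by omega)) ≤ phi (graphUrtF (r + 1) t m) :=
  phi_le_of_embedding <| graphUrtFEmbedding (cycleGraphRotate (m ⟨0, ht⟩))
    ⟨fun _ => ⟨0, ht⟩, Function.injective_of_subsingleton _⟩ fun j => by
      rw [Subsingleton.elim j 0]; exact zero_add _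

-- Among three vertices of a pentagon two are at distance 2.
theorem phi_graphUrtF_five_two_le_phi_graphUrtF {m : Fin t → Fin 5} (hm : m.Injective)
    (ht : 3 ≤ t) : phi (graphUrtF 5 2 ![0, 2]) ≤ phi (graphUrtF 5 t m) := by
  have hpair : ∀ s : Finset (Fin 5), 3 ≤ s.card → ∃ i ∈ s, 2 + i ∈ s := by decide
  obtain ⟨i, hi, hi'⟩ := hpair (Finset.univ.image m) (by
    rwa [Finset.card_image_of_injective _ hm, Finset.card_univ, Fintype.card_fin])
  obtain ⟨j, -, rfl⟩ := Finset.mem_image.1 hi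
  obtain ⟨j', -, hj'⟩ := Finset.mem_image.1 hi'
  have hne : j ≠ j' := by
    rintro rfl
    simp at hj'
  refine phi_le_of_embedding (graphUrtFEmbedding (cycleGraphRotate (m j)) ⟨![j, j'], ?_⟩ ?_)
  · simp [Function.Injective, Fin.forall_fin_two, hne, hne.symm]
  · exact Fin.forall_fin_two.2 ⟨zero_add _, hj'.symm⟩

theorem isPhiExtremal_graphUrtF_three_or_lt_phi {m : Fin t → Fin 3} (hm : m.Injective)
    (hcard : 3 + t = 2 * q + 4) :
    IsPhiExtremal q (graphUrtF 3 t m) ∨ q + 4 < phi (graphUrtF 3 t m) := by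
  have ht : t ≤ 3 := by simpa using Fintype.card_le_of_injective m hm
  obtain ⟨rfl, rfl⟩ | ⟨rfl, rfl⟩ : t = 1 ∧ q = 0 ∨ t = 3 ∧ q = 1 := by omega
  · obtain ⟨e⟩ := nonempty_graphUrtF_one_iso (m := m)
    exact .inl (.inl (nonempty_graphUrt_three_one_iso.map e.trans))
  · obtain ⟨e⟩ := nonempty_graphUrtF_self_iso hm
    rw [phi_eq_of_iso e, phi_graphUrt_three_three]
    exact .inr (by omega)

theorem isPhiExtremal_graphUrtF_four_or_lt_phi {m : Fin t → Fin 4} (hm : m.Injective)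
    (hcard : 4 + t = 2 * q + 4) :
    IsPhiExtremal q (graphUrtF 4 t m) ∨ q + 4 < phi (graphUrtF 4 t m) := by
  have ht : t ≤ 4 := by simpa using Fintype.card_le_of_injective m hm
  obtain ⟨rfl, rfl⟩ | hq : t = 4 ∧ q = 2 ∨ q < 2 := by omega
  · exact .inl (.inr (.inr ⟨rfl, nonempty_graphUrtF_self_iso hm⟩))
  · have := phi_cycleGraph_le_phi_graphUrtF (m := m)
    rw [phi_cycleGraph_four] at this
    exact .inr (by omega)

theorem isPhiExtremal_graphUrtF_five_or_lt_phi {m : Fin t → Fin 5} (hm : m.Injective)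
    (hcard : 5 + t = 2 * q + 4) :
    IsPhiExtremal q (graphUrtF 5 t m) ∨ q + 4 < phi (graphUrtF 5 t m) := by
  have ht : t ≤ 5 := by simpa using Fintype.card_le_of_injective m hm
  obtain ⟨rfl, rfl⟩ | ht' : t = 1 ∧ q = 1 ∨ 3 ≤ t := by omega
  · exact .inl (.inr (.inl ⟨rfl, .inr nonempty_graphUrtF_one_iso⟩))
  · have := phi_graphUrtF_five_two_le_phi_graphUrtF hm ht'
    rw [phi_graphUrtF_five_two] at this
    exact .inr (by omega)

theorem isPhiExtremal_graphUrtF_six_or_lt_phi {m : Fin t → Fin 6} (hm : m.Injective)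
    (hcard : 6 + t = 2 * q + 4) :
    IsPhiExtremal q (graphUrtF 6 t m) ∨ q + 4 < phi (graphUrtF 6 t m) := by
  have ht : t ≤ 6 := by simpa using Fintype.card_le_of_injective m hm
  obtain rfl | ht' := t.eq_zero_or_pos
  · exact .inl (.inr (.inl ⟨by omega, .inl nonempty_graphUrtF_zero_iso⟩))
  · have : phi (graphUrt 6 1 (by omega)) ≤ phi (graphUrtF 6 t m) :=
      phi_graphUrt_one_le_phi_graphUrtF ht'
    rw [phi_graphUrt_six_one] at this
    exact .inr (by omega)

theorem isPhiExtremal_graphUrtF_or_lt_phi (hr : 3 ≤ r) (hm : m.Injective)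
    (hcard : r + t = 2 * q + 4) :
    IsPhiExtremal q (graphUrtF r t m) ∨ q + 4 < phi (graphUrtF r t m) := by
  obtain rfl | rfl | rfl | rfl | hr : r = 3 ∨ r = 4 ∨ r = 5 ∨ r = 6 ∨ 7 ≤ r := by omega
  · exact isPhiExtremal_graphUrtF_three_or_lt_phi hm hcard
  · exact isPhiExtremal_graphUrtF_four_or_lt_phi hm hcard
  · exact isPhiExtremal_graphUrtF_five_or_lt_phi hm hcard
  · exact isPhiExtremal_graphUrtF_six_or_lt_phi hm hcard
  · have ht : t ≤ r := by simpa using Fintype.card_le_of_injective m hm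
    have := add_three_le_phi_cycleGraph hr
    have := phi_cycleGraph_le_phi_graphUrtF (m := m)
    exact .inr (by omega)

end GraphUrtFExtremal

section Main

variable {V : Type*} [Fintype V] {G : SimpleGraph V} {q : ℕ}

theorem IsUnicyclic.isPhiExtremal_or_lt_phi_of_forall_not_isPendantPair (hG : IsUnicyclic G)
    (hred : ∀ u v w, ¬ IsPendantPair G u v w) (hcard : Fintype.card V = 2 * q + 4) :
    IsPhiExtremal q G ∨ q + 4 < phi G := by
  classical
  obtain ⟨r, t, m, hr, hm, ⟨e⟩⟩ := hG.exists_graphUrtF_iso hred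
  rw [← phi_eq_of_iso e]
  refine (isPhiExtremal_graphUrtF_or_lt_phi hr hm ?_).imp_left (.of_iso e.symm)
  rw [← hcard, ← Fintype.card_congr e.toEquiv, Fintype.card_sum, Fintype.card_fin,
    Fintype.card_fin]

theorem IsUnicyclic.isPhiExtremal_or_lt_phi (hG : IsUnicyclic G)
    (hcard : Fintype.card V = 2 * q + 4) : IsPhiExtremal q G ∨ q + 4 < phi G := by
  classical
  induction q using Nat.strong_induction_on generalizing V with | h q ih => ?_
  by_cases hred : ∀ u v w, ¬ IsPendantPair G u v w
  · exact hG.isPhiExtremal_or_lt_phi_of_forall_not_isPendantPair hred hcard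
  · push Not at hred
    obtain ⟨u, v, w, huvw⟩ := hred
    have hH := hG.induce_compl_pair huvw
    have hcardH : Fintype.card ({u, v}ᶜ : Set V) = 2 * q + 2 := by
      rw [Fintype.card_compl_set, hcard, Set.card_insert _ (by simpa using huvw.ne),
        Set.card_singleton]
      omega
    obtain ⟨p, rfl⟩ : ∃ p, q = p + 1 := Nat.exists_eq_succ_of_ne_zero <| by
      rintro rfl
      exact absurd hH.three_le_card (by omega)
    have hw : w ∈ ({u, v}ᶜ : Set V) := by simp [huvw.ne_right.symm, huvw.adj.ne']
    exact IsPendantPair.isPhiExtremal_or_lt_phi (f := Embedding.induce _) (w := ⟨w, hw⟩) huvw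
      Subtype.range_coe (ih p p.lt_succ_self hH (by omega))

theorem IsUnicyclic.phi_eq_iff_isPhiExtremal (hG : IsUnicyclic G)
    (hcard : Fintype.card V = 2 * q + 4) : phi G = q + 4 ↔ IsPhiExtremal q G :=
  ⟨fun h => (hG.isPhiExtremal_or_lt_phi hcard).resolve_right h.not_gt, IsPhiExtremal.phi_eq⟩

end Main

/-- for even `n ≥ 4`, a unicyclic graph `G` of order `n` satisfies
`phi G = ⌊n/2⌋ + 2` iff `G ≅ U((n-2)/2, (n-4)/2)`, or `n = 6` and `G` is isomorphic to
`U_{6,0} = C₆` or `U_{5,1}`, or `n = 8` and `G ≅ U_{4,4}`. -/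
theorem stmt2 {V : Type*} [Fintype V] (G : SimpleGraph V) (n : ℕ) (hn : 4 ≤ n) (heven : Even n)
    (hcard : Fintype.card V = n) (hG : IsUnicyclic G) :
    phi G = n / 2 + 2 ↔
      Nonempty (G ≃g graphU ((n - 2) / 2) ((n - 4) / 2) (by omega)) ∨
      (n = 6 ∧ (Nonempty (G ≃g cycleGraph 6) ∨ Nonempty (G ≃g graphUrt 5 1 (by omega)))) ∨
      (n = 8 ∧ Nonempty (G ≃g graphUrt 4 4 (by omega))) := by
  obtain ⟨q, rfl⟩ : ∃ q, n = 2 * q + 4 := by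
    obtain ⟨m, rfl⟩ := heven
    exact ⟨m - 2, by omega⟩
  have hU : ∀ {a b} (h : b ≤ a), a = q + 1 → b = q →
      (Nonempty (G ≃g graphU a b h) ↔ Nonempty (G ≃g graphU (q + 1) q (Nat.le_succ q))) := by
    rintro _ _ h rfl rfl
    rfl
  have h6 : 2 * q + 4 = 6 ↔ q = 1 := by omega
  have h8 : 2 * q + 4 = 8 ↔ q = 2 := by omega
  have hphi : (2 * q + 4) / 2 + 2 = q + 4 := by omega
  rw [h6, h8, hphi, hU (a := (2 * q + 4 - 2) / 2) (b := (2 * q + 4 - 4) / 2) (by omega)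
    (by omega) (by omega)]
  exact hG.phi_eq_iff_isPhiExtremal hcard
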